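/- Let B₁, B₂ be real 2×2 non-diagonalizable Vandergraft matrices whose dominant eigenlines are distinct. Let u₁ be an eigenvector of B₁ and let u₂ be an eigenvector of B₂ chosen so that u₂ is positively associated with u₁ relative to B₁. Then: if u₁ is negatively associated with u₂ relative to B₂, then B₁ and B₂ have no common invariant proper cone; and if u₁ is positively associated with u₂ relative to B₂, then the only proper cones invariant under both B₁ and B₂ are Cone{u₁, u₂} and −Cone{u₁, u₂}. -/

import Mathlib

/-- A set `K ⊆ ℝ^m` is a proper cone: closed under nonnegative scaling,
convex (closed under addition), topologically closed, pointed and solid. -/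
def IsProperCone {m : ℕ} (K : Set (Fin m → ℝ)) : Prop :=
  (∀ a : ℝ, 0 ≤ a → ∀ x ∈ K, a • x ∈ K) ∧
  (∀ x ∈ K, ∀ y ∈ K, x + y ∈ K) ∧
  IsClosed K ∧ K ∩ (-K) = {0} ∧ (interior K).Nonempty

/-- `K` is invariant under the matrix `A`. -/
def InvariantUnder {m : ℕ} (A : Matrix (Fin m) (Fin m) ℝ) (K : Set (Fin m → ℝ)) : Prop :=
  ∀ x ∈ K, A.mulVec x ∈ K

/-- `coneGen X` is the smallest convex cone containing `X`. -/
def coneGen {m : ℕ} (X : Set (Fin m → ℝ)) : Set (Fin m → ℝ) :=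
  ⋂₀ {K : Set (Fin m → ℝ) |
    (∀ a : ℝ, 0 ≤ a → ∀ x ∈ K, a • x ∈ K) ∧ (∀ x ∈ K, ∀ y ∈ K, x + y ∈ K) ∧ X ⊆ K}

/-- `A` is diagonalizable by a real similarity. -/
def IsDiagonalizable (A : Matrix (Fin 2) (Fin 2) ℝ) : Prop :=
  ∃ P : Matrix (Fin 2) (Fin 2) ℝ, IsUnit P.det ∧ (P⁻¹ * A * P).IsDiag

/-!
If `A v = l v + w` with `A w = l w` and `l > 0`, then the rescaled iterates
`l⁻ⁿ Aⁿ v = v + (n / l) w` drift in the direction of `w`, so an invariant closed cone containing `v`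
contains `w`; for `l = 0` this is immediate. Hence a common invariant proper cone contains, with
each `p u₁ + q u₂`, both `x q u₁` and `y p u₂`, where `x` and `y` are the two association
coefficients. By solidity it has a point with `q ≠ 0`, and three such steps give `x q u₁` and
`x² y q u₁`. Pointedness then forces `x y ≥ 0`. When both coefficients are positive, the cone
contains `u₁` and `u₂`, or their opposites, and pointedness fixes the signs of all coordinates.
-/

section Recession

open Filter Topology

variable {E : Type*} [AddCommGroup E] [Module ℝ E]

/-- `u` is an eigenvector of `f` for `l` (or zero) and `f v = l v + x u`; in the terminology of the
paper, `v` is positively (negatively) associated with `u` relative to `f` when `0 < x` (`x < 0`).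
The coefficient `x` is recorded so that both signs are treated at once. -/
structure IsAssociatedPair (f : E →ₗ[ℝ] E) (l x : ℝ) (u v : E) : Prop where
  apply_fst : f u = l • u
  apply_snd : f v = l • v + x • u

variable [TopologicalSpace E] [ContinuousAdd E] [ContinuousSMul ℝ E] {K : Set E}

lemma mem_of_forall_add_nat_smul_mem (hsmul : ∀ a : ℝ, 0 ≤ a → ∀ z ∈ K, a • z ∈ K)
    (hclosed : IsClosed K) {v w : E} (h : ∀ n : ℕ, v + (n : ℝ) • w ∈ K) : w ∈ K := by
  have hlim : Tendsto (fun n : ℕ ↦ (1 / ((n : ℝ) + 1)) • v + w) atTop (𝓝 w) := by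
    simpa using ((tendsto_one_div_add_atTop_nhds_zero_nat (𝕜 := ℝ)).smul_const v).add_const w
  refine hclosed.mem_of_tendsto hlim (.of_forall fun n ↦ ?_)
  have hscaled := hsmul (1 / ((n : ℝ) + 1)) (by positivity) _ (h (n + 1))
  have hn : (n : ℝ) + 1 ≠ 0 := by positivity
  rwa [Nat.cast_add_one, smul_add, smul_smul, one_div_mul_cancel hn, one_smul] at hscaled

lemma mem_of_mapsTo_of_apply_eq_smul_add (hsmul : ∀ a : ℝ, 0 ≤ a → ∀ z ∈ K, a • z ∈ K)
    (hclosed : IsClosed K) {f : E →ₗ[ℝ] E} (hf : Set.MapsTo f K K) {l : ℝ} (hl : 0 ≤ l)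
    {v w : E} (hw : f w = l • w) (hv : f v = l • v + w) (hvK : v ∈ K) : w ∈ K := by
  obtain rfl | hl := hl.eq_or_lt
  · simpa [hv] using hf hvK
  have horbit (n : ℕ) : v + (n : ℝ) • l⁻¹ • w ∈ K := by
    induction n with
    | zero => simpa using hvK
    | succ n ih =>
      have hstep := hsmul l⁻¹ (by positivity) _ (hf ih)
      have happly : l⁻¹ • f (v + (n : ℝ) • l⁻¹ • w) = v + ((n + 1 : ℕ) : ℝ) • l⁻¹ • w := by
        rw [map_add, map_smul, map_smul, hv, hw, Nat.cast_add_one]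
        match_scalars
        · field_simp
        · field_simp
          ring
      rwa [happly] at hstep
  have hmem := hsmul l hl.le _ (mem_of_forall_add_nat_smul_mem hsmul hclosed horbit)
  rwa [smul_inv_smul₀ hl.ne'] at hmem

end Recession

section ProperCone

variable {m : ℕ} {K : Set (Fin m → ℝ)} {A : Matrix (Fin m) (Fin m) ℝ}

namespace IsProperCone

lemma smul_mem (hK : IsProperCone K) : ∀ a : ℝ, 0 ≤ a → ∀ z ∈ K, a • z ∈ K := hK.1

lemma add_mem (hK : IsProperCone K) : ∀ z ∈ K, ∀ w ∈ K, z + w ∈ K := hK.2.1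

lemma isClosed (hK : IsProperCone K) : IsClosed K := hK.2.2.1

lemma mem_of_smul_mem (hK : IsProperCone K) {a : ℝ} (ha : 0 < a) {u : Fin m → ℝ}
    (hu : a • u ∈ K) : u ∈ K := by
  simpa only [inv_smul_smul₀ ha.ne'] using hK.smul_mem a⁻¹ (inv_pos.mpr ha).le _ hu

lemma eq_zero_of_mem_of_neg_mem (hK : IsProperCone K) {u : Fin m → ℝ} (hu : u ∈ K)
    (hneg : -u ∈ K) : u = 0 := by
  obtain ⟨-, -, -, hpointed, -⟩ := hK
  exact hpointed.subset ⟨hu, hneg⟩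

lemma neg (hK : IsProperCone K) : IsProperCone (-K) := by
  obtain ⟨hsmul, hadd, hclosed, hpointed, hsolid⟩ := hK
  refine ⟨fun a ha z hz ↦ ?_, fun z hz w hw ↦ ?_, hclosed.neg, ?_, ?_⟩
  · simpa only [Set.mem_neg, smul_neg] using hsmul a ha _ hz
  · simpa only [Set.mem_neg, neg_add] using hadd _ hz _ hw
  · rwa [neg_neg, Set.inter_comm]
  · simpa only [← Set.image_neg_eq_neg, ← Homeomorph.coe_neg, ← Homeomorph.image_interior]
      using hsolid.image _

lemma mul_nonneg_of_smul_mem (hK : IsProperCone K) {u : Fin m → ℝ} (hu : u ≠ 0) {a c : ℝ}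
    (ha : a • u ∈ K) (hc : c • u ∈ K) : 0 ≤ a * c := by
  by_contra! hac
  have hopp : |a| * c = -(|c| * a) := by
    obtain ⟨ha', hc'⟩ | ⟨ha', hc'⟩ := mul_neg_iff.mp hac
    · rw [abs_of_pos ha', abs_of_neg hc']; ring
    · rw [abs_of_neg ha', abs_of_pos hc']; ring
  have hpos := hK.smul_mem |c| (abs_nonneg c) _ ha
  have hneg := hK.smul_mem |a| (abs_nonneg a) _ hc
  rw [smul_smul] at hpos hneg
  rw [hopp, neg_smul] at hneg
  have hzero := hK.eq_zero_of_mem_of_neg_mem hpos hneg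
  have hca : |c| * a ≠ 0 := mul_ne_zero (abs_ne_zero.mpr (right_ne_zero_of_mul hac.ne))
    (left_ne_zero_of_mul hac.ne)
  exact (smul_ne_zero hca hu) hzero

lemma exists_mem_apply_ne_zero (hK : IsProperCone K) {φ : (Fin m → ℝ) →ₗ[ℝ] ℝ} (hφ : φ ≠ 0) :
    ∃ v ∈ K, φ v ≠ 0 := by
  obtain ⟨-, -, -, -, hsolid⟩ := hK
  by_contra! hvanish
  exact hφ (LinearMap.ker_eq_top.mp (φ.ker.eq_top_of_nonempty_interior'
    (hsolid.mono (interior_mono hvanish))))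

end IsProperCone

lemma InvariantUnder.neg (h : InvariantUnder A K) : InvariantUnder A (-K) := fun z hz ↦ by
  simpa only [Set.mem_neg, Matrix.mulVec_neg] using h _ hz

end ProperCone

section ConeGen

variable {m : ℕ} {X K : Set (Fin m → ℝ)} {A : Matrix (Fin m) (Fin m) ℝ}

lemma subset_coneGen : X ⊆ coneGen X := Set.subset_sInter fun _ hK ↦ hK.2.2

lemma coneGen_subset (hsmul : ∀ a : ℝ, 0 ≤ a → ∀ z ∈ K, a • z ∈ K)
    (hadd : ∀ z ∈ K, ∀ w ∈ K, z + w ∈ K) (hX : X ⊆ K) : coneGen X ⊆ K :=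
  Set.sInter_subset_of_mem ⟨hsmul, hadd, hX⟩

lemma smul_mem_coneGen (a : ℝ) (ha : 0 ≤ a) (z : Fin m → ℝ) (hz : z ∈ coneGen X) :
    a • z ∈ coneGen X :=
  fun K hK ↦ hK.1 a ha z (hz K hK)

lemma add_mem_coneGen (z : Fin m → ℝ) (hz : z ∈ coneGen X) (w : Fin m → ℝ)
    (hw : w ∈ coneGen X) : z + w ∈ coneGen X :=
  fun K hK ↦ hK.2.1 z (hz K hK) w (hw K hK)

lemma invariantUnder_coneGen_of_mulVec_mem (h : ∀ z ∈ X, A.mulVec z ∈ coneGen X) :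
    InvariantUnder A (coneGen X) := by
  refine coneGen_subset (K := {z | A.mulVec z ∈ coneGen X}) (fun a ha z hz ↦ ?_)
    (fun z hz w hw ↦ ?_) h
  · simpa only [Set.mem_ofPred_eq, Matrix.mulVec_smul] using smul_mem_coneGen a ha _ hz
  · simpa only [Set.mem_ofPred_eq, Matrix.mulVec_add] using add_mem_coneGen _ hz _ hw

lemma IsAssociatedPair.invariantUnder_coneGen {l x : ℝ} {u v : Fin m → ℝ}
    (h : IsAssociatedPair A.mulVecLin l x u v) (hl : 0 ≤ l) (hx : 0 ≤ x) :
    InvariantUnder A (coneGen {u, v}) := by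
  have hu : u ∈ coneGen {u, v} := subset_coneGen (by simp)
  have hv : v ∈ coneGen {u, v} := subset_coneGen (by simp)
  refine invariantUnder_coneGen_of_mulVec_mem ?_
  rintro z (rfl | rfl)
  · simpa only [← A.mulVecLin_apply, h.apply_fst] using smul_mem_coneGen l hl _ hu
  · simpa only [← A.mulVecLin_apply, h.apply_snd] using
      add_mem_coneGen _ (smul_mem_coneGen l hl _ hv) _ (smul_mem_coneGen x hx _ hu)

end ConeGen

section Basis

open Module

lemma exists_basis_fin_two {F V : Type*} [DivisionRing F] [AddCommGroup V] [Module F V]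
    (hV : finrank F V = 2) {u v : V} (hu : u ≠ 0) (hv : ∀ c : F, v ≠ c • u) :
    ∃ b : Basis (Fin 2) F V, b 0 = u ∧ b 1 = v := by
  have hli : LinearIndependent F ![u, v] :=
    (LinearIndependent.pair_iff' hu).mpr fun c ↦ (hv c).symm
  exact ⟨basisOfLinearIndependentOfCardEqFinrank hli (by simp [hV]), by simp, by simp⟩

variable {m : ℕ} {ι : Type*} (b : Basis ι ℝ (Fin m → ℝ)) {K : Set (Fin m → ℝ)}

lemma IsProperCone.exists_mem_coord_ne_zero (hK : IsProperCone K) (i : ι) :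
    ∃ v ∈ K, b.coord i v ≠ 0 :=
  hK.exists_mem_apply_ne_zero fun h ↦ by simpa using LinearMap.congr_fun h (b i)

variable [Nonempty ι]

lemma coneGen_range_basis : coneGen (Set.range b) = {v | ∀ i, 0 ≤ b.coord i v} := by
  classical
  have := FiniteDimensional.fintypeBasisIndex b
  refine (coneGen_subset ?_ ?_ ?_).antisymm fun v hv ↦ ?_
  · intro a ha z hz i
    simpa using mul_nonneg ha (hz i)
  · intro z hz w hw i
    simpa using add_nonneg (hz i) (hw i)
  · rintro _ ⟨j, rfl⟩ i
    simp only [b.coord_apply, b.repr_self, Finsupp.single_apply]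
    split_ifs <;> norm_num
  · rw [← b.sum_repr v]
    exact Finset.sum_induction_nonempty _ (· ∈ coneGen (Set.range b))
      (fun z w hz hw ↦ add_mem_coneGen z hz w hw) Finset.univ_nonempty
      fun i _ ↦ smul_mem_coneGen _ (hv i) _ (subset_coneGen ⟨i, rfl⟩)

lemma isProperCone_coneGen_range_basis : IsProperCone (coneGen (Set.range b)) := by
  classical
  have := FiniteDimensional.fintypeBasisIndex b
  have hcont (i : ι) : Continuous (b.coord i) := (b.coord i).continuous_of_finiteDimensional
  refine ⟨smul_mem_coneGen, add_mem_coneGen, ?_, ?_, ∑ i, b i, ?_⟩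
  all_goals rw [coneGen_range_basis]
  · simp only [Set.ofPred_forall]
    exact isClosed_iInter fun i ↦ isClosed_le continuous_const (hcont i)
  · refine Set.Subset.antisymm (fun v ⟨hpos, hneg⟩ ↦ ?_) (by simp)
    refine b.ext_elem fun i ↦ le_antisymm ?_ ?_
    · simpa using hneg i
    · simpa using hpos i
  · have hopen : IsOpen {v | ∀ i, 0 < b.coord i v} := by
      simp only [Set.ofPred_forall]
      exact isOpen_iInter_of_finite fun i ↦ isOpen_lt continuous_const (hcont i)
    refine mem_interior.mpr ⟨_, fun v hv i ↦ (hv i).le, hopen, fun i ↦ ?_⟩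
    simp [Finsupp.single_apply]

lemma IsProperCone.eq_coneGen_range_basis (hK : IsProperCone K) (hb : ∀ i, b i ∈ K)
    (hcoord : ∀ v ∈ K, ∀ i, ∃ j, b.coord i v • b j ∈ K) : K = coneGen (Set.range b) := by
  refine Set.Subset.antisymm (fun v hv ↦ ?_)
    (coneGen_subset hK.smul_mem hK.add_mem (Set.range_subset_iff.mpr hb))
  rw [coneGen_range_basis]
  intro i
  obtain ⟨j, hj⟩ := hcoord v hv i
  have hbj : (1 : ℝ) • b j ∈ K := by simpa using hb j
  simpa using hK.mul_nonneg_of_smul_mem (b.ne_zero j) hj hbj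

end Basis

section AssociatedPairs

open Module

variable {B B₁ B₂ : Matrix (Fin 2) (Fin 2) ℝ} {l l₁ l₂ x y : ℝ}
  {b : Basis (Fin 2) ℝ (Fin 2 → ℝ)} {K : Set (Fin 2 → ℝ)}

namespace IsProperCone

lemma smul_coord_smul_mem (hK : IsProperCone K) (hB : InvariantUnder B K) {i j : Fin 2}
    (hij : i ≠ j) (h : IsAssociatedPair B.mulVecLin l x (b i) (b j)) (hl : 0 ≤ l)
    {w : Fin 2 → ℝ} (hw : w ∈ K) : x • b.coord j w • b i ∈ K := by
  have hexpand : w = b.coord i w • b i + b.coord j w • b j := by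
    rw [← Fintype.sum_eq_add (f := fun k ↦ b.coord k w • b k) i j hij (by lia)]
    exact (b.sum_repr w).symm
  refine mem_of_mapsTo_of_apply_eq_smul_add hK.smul_mem hK.isClosed (f := B.mulVecLin)
    (fun z hz ↦ hB z hz) hl ?_ ?_ hw
  · rw [map_smul, map_smul, h.apply_fst, smul_comm l, smul_comm l]
  · generalize b.coord i w = c, b.coord j w = d at hexpand ⊢
    rw [hexpand, map_add, map_smul, map_smul, h.apply_fst, h.apply_snd]
    module

lemma mul_nonneg_of_isAssociatedPair (hK : IsProperCone K) (hB₁ : InvariantUnder B₁ K)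
    (hB₂ : InvariantUnder B₂ K) (hl₁ : 0 ≤ l₁) (hl₂ : 0 ≤ l₂)
    (h₁ : IsAssociatedPair B₁.mulVecLin l₁ x (b 0) (b 1))
    (h₂ : IsAssociatedPair B₂.mulVecLin l₂ y (b 1) (b 0)) : 0 ≤ x * y := by
  obtain rfl | hx := eq_or_ne x 0
  · simp
  obtain ⟨w, hw, hc⟩ := hK.exists_mem_coord_ne_zero b 1
  set c := b.coord 1 w
  have hmem : (x * c) • b 0 ∈ K := by
    simpa only [smul_smul] using hK.smul_coord_smul_mem hB₁ zero_ne_one h₁ hl₁ hw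
  have hreturn : (x * y * (x * c)) • b 0 ∈ K := by
    have hcross := hK.smul_coord_smul_mem hB₂ one_ne_zero h₂ hl₂ hmem
    have hback := hK.smul_coord_smul_mem hB₁ zero_ne_one h₁ hl₁ hcross
    simpa [smul_smul, mul_assoc] using hback
  have hsquare : 0 ≤ x * y * (x * c) ^ 2 := by
    simpa only [sq, mul_assoc] using hK.mul_nonneg_of_smul_mem (b.ne_zero 0) hreturn hmem
  exact nonneg_of_mul_nonneg_left hsquare (by positivity)

lemma eq_coneGen_of_coord_pos (hK : IsProperCone K) (hB₁ : InvariantUnder B₁ K)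
    (hB₂ : InvariantUnder B₂ K) (hl₁ : 0 ≤ l₁) (hl₂ : 0 ≤ l₂) (hx : 0 < x) (hy : 0 < y)
    (h₁ : IsAssociatedPair B₁.mulVecLin l₁ x (b 0) (b 1))
    (h₂ : IsAssociatedPair B₂.mulVecLin l₂ y (b 1) (b 0)) {w : Fin 2 → ℝ} (hw : w ∈ K)
    (hpos : 0 < b.coord 1 w) : K = coneGen (Set.range b) := by
  have hcoord₁ (v) (hv : v ∈ K) : b.coord 1 v • b 0 ∈ K :=
    hK.mem_of_smul_mem hx (hK.smul_coord_smul_mem hB₁ zero_ne_one h₁ hl₁ hv)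
  have hcoord₀ (v) (hv : v ∈ K) : b.coord 0 v • b 1 ∈ K :=
    hK.mem_of_smul_mem hy (hK.smul_coord_smul_mem hB₂ one_ne_zero h₂ hl₂ hv)
  have hb₀ : b 0 ∈ K := hK.mem_of_smul_mem hpos (hcoord₁ w hw)
  have hb₁ : b 1 ∈ K := by simpa using hcoord₀ (b 0) hb₀
  exact hK.eq_coneGen_range_basis b (Fin.forall_fin_two.mpr ⟨hb₀, hb₁⟩) fun v hv ↦
    Fin.forall_fin_two.mpr ⟨⟨1, hcoord₀ v hv⟩, ⟨0, hcoord₁ v hv⟩⟩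

lemma eq_coneGen_or_eq_neg_coneGen (hK : IsProperCone K) (hB₁ : InvariantUnder B₁ K)
    (hB₂ : InvariantUnder B₂ K) (hl₁ : 0 ≤ l₁) (hl₂ : 0 ≤ l₂) (hx : 0 < x) (hy : 0 < y)
    (h₁ : IsAssociatedPair B₁.mulVecLin l₁ x (b 0) (b 1))
    (h₂ : IsAssociatedPair B₂.mulVecLin l₂ y (b 1) (b 0)) :
    K = coneGen (Set.range b) ∨ K = -coneGen (Set.range b) := by
  obtain ⟨w, hw, hne⟩ := hK.exists_mem_coord_ne_zero b 1
  obtain hneg | hpos := hne.lt_or_gt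
  · right
    rw [← neg_eq_iff_eq_neg]
    exact hK.neg.eq_coneGen_of_coord_pos hB₁.neg hB₂.neg hl₁ hl₂ hx hy h₁ h₂
      (w := -w) (by simpa using hw) (by simpa using hneg)
  · exact .inl (hK.eq_coneGen_of_coord_pos hB₁ hB₂ hl₁ hl₂ hx hy h₁ h₂ hw hpos)

end IsProperCone

end AssociatedPairs

/-- Theorem: let `B₁, B₂` be non-diagonalizable `2×2` Vandergraft matrices
(eigenvalues `l₁, l₂ ≥ 0`) with distinct dominant eigenlines, `u₁` an
eigenvector of `B₁`, and `u₂` an eigenvector of `B₂` positively associated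
with `u₁` relative to `B₁`. If `u₁` is negatively associated with `u₂`
relative to `B₂`, there is no common invariant proper cone; if it is
positively associated, the only common invariant proper cones are
`Cone{u₁,u₂}` and `−Cone{u₁,u₂}`. -/
theorem two_nondiagonalizable_common_cones
    (B₁ B₂ : Matrix (Fin 2) (Fin 2) ℝ) (l₁ l₂ : ℝ)
    (hl₁ : 0 ≤ l₁) (hl₂ : 0 ≤ l₂)
    (hnd₁ : ¬ IsDiagonalizable B₁) (hnd₂ : ¬ IsDiagonalizable B₂)
    (u₁ u₂ : Fin 2 → ℝ)
    (hu₁ : u₁ ≠ 0) (heig₁ : B₁.mulVec u₁ = l₁ • u₁)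
    (hu₂ : u₂ ≠ 0) (heig₂ : B₂.mulVec u₂ = l₂ • u₂)
    (hdist : ∀ c : ℝ, u₂ ≠ c • u₁)
    (hpos : ∃ x : ℝ, 0 < x ∧ B₁.mulVec u₂ = l₁ • u₂ + x • u₁) :
    ((∃ y : ℝ, y < 0 ∧ B₂.mulVec u₁ = l₂ • u₁ + y • u₂) →
      ¬ ∃ K : Set (Fin 2 → ℝ),
        IsProperCone K ∧ InvariantUnder B₁ K ∧ InvariantUnder B₂ K) ∧
    ((∃ y : ℝ, 0 < y ∧ B₂.mulVec u₁ = l₂ • u₁ + y • u₂) →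
      (IsProperCone (coneGen {u₁, u₂}) ∧
        InvariantUnder B₁ (coneGen {u₁, u₂}) ∧ InvariantUnder B₂ (coneGen {u₁, u₂}) ∧
        IsProperCone (-(coneGen {u₁, u₂})) ∧
        InvariantUnder B₁ (-(coneGen {u₁, u₂})) ∧ InvariantUnder B₂ (-(coneGen {u₁, u₂})) ∧
        ∀ K : Set (Fin 2 → ℝ),
          IsProperCone K → InvariantUnder B₁ K → InvariantUnder B₂ K →
            K = coneGen {u₁, u₂} ∨ K = -(coneGen {u₁, u₂}))) := by
  obtain ⟨b, rfl, rfl⟩ := exists_basis_fin_two (by simp) hu₁ hdist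
  obtain ⟨x, hx, hB₁⟩ := hpos
  have h₁ : IsAssociatedPair B₁.mulVecLin l₁ x (b 0) (b 1) := ⟨heig₁, hB₁⟩
  constructor
  · rintro ⟨y, hy, hB₂⟩ ⟨K, hK, hK₁, hK₂⟩
    have h₂ : IsAssociatedPair B₂.mulVecLin l₂ y (b 1) (b 0) := ⟨heig₂, hB₂⟩
    exact (mul_neg_of_pos_of_neg hx hy).not_ge
      (hK.mul_nonneg_of_isAssociatedPair hK₁ hK₂ hl₁ hl₂ h₁ h₂)
  · rintro ⟨y, hy, hB₂⟩
    have h₂ : IsAssociatedPair B₂.mulVecLin l₂ y (b 1) (b 0) := ⟨heig₂, hB₂⟩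
    have hC₁ := h₁.invariantUnder_coneGen hl₁ hx.le
    have hC₂ := h₂.invariantUnder_coneGen hl₂ hy.le
    have hrange : Set.range b = {b 0, b 1} := by ext; simp [Fin.exists_fin_two, eq_comm]
    rw [Set.pair_comm, ← hrange] at hC₂
    rw [← hrange] at hC₁ ⊢
    have hC := isProperCone_coneGen_range_basis b
    exact ⟨hC, hC₁, hC₂, hC.neg, hC₁.neg, hC₂.neg, fun K hK hK₁ hK₂ ↦
      hK.eq_coneGen_or_eq_neg_coneGen hK₁ hK₂ hl₁ hl₂ hx hy h₁ h₂⟩
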